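/- Define Ψ : ℝ³ → ℝ² by Ψ(x,y,z) = ( z(−y + xz)/(1 + z²), z(x + yz)/(1 + z²) ). Then for every (r,s) ∈ ℝ² with r² + s² = 1 and every t ∈ ℝ, Ψ(r − t·s, s + t·r, t) = (−t·s, t·r). Consequently, Ψ restricted to the fiber P⁻¹{(r,s)} = {(r − ts, s + tr, t) : t ∈ ℝ} of the hyperboloid ℋ over (r,s) is a bijection onto the line {λ·(−s, r) : λ ∈ ℝ} ⊂ ℝ², linear in the fiber parameter t; this identifies the fiber of ℋ over (r,s) with the tangent line to S¹ at (r,s). -/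

import Mathlib

open Set Function

theorem bijOn_range_of_injective_comp {α β γ : Type*} {f : α → β} {g : β → γ}
    (hgf : Injective (g ∘ f)) : BijOn g (range f) (range (g ∘ f)) :=
  range_comp g f ▸ hgf.injOn_range.bijOn_image

section Field

variable {K : Type*} [Field K]

/-- The map `Ψ`, over an arbitrary field: on the hyperboloid `x² + y² - z² = 1` it is the fiber
component of the isomorphism with the tangent bundle of the circle. Where `1 + z² = 0`, division by
zero gives the junk value `(0, 0)`. -/
def tangentComponent (p : K × K × K) : K × K :=
  (p.2.2 * (-p.2.1 + p.1 * p.2.2) / (1 + p.2.2 ^ 2),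
    p.2.2 * (p.1 + p.2.1 * p.2.2) / (1 + p.2.2 ^ 2))

/-- The line through `(r, s, 0)` with direction `(-s, r, 1)`, parametrized by height. For `(r, s)`
on the unit circle it is a ruling of the hyperboloid, namely the fiber of `P` over `(r, s)`. -/
def ruling (r s t : K) : K × K × K :=
  (r - t * s, s + t * r, t)

theorem tangentComponent_ruling (r s : K) {t : K} (ht : 1 + t ^ 2 ≠ 0) :
    tangentComponent (ruling r s t) = t • (-s, r) := by
  ext
  · calc t * (-(s + t * r) + (r - t * s) * t) / (1 + t ^ 2)
      _ = t * -s * (1 + t ^ 2) / (1 + t ^ 2) := by ring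
      _ = t * -s := mul_div_cancel_right₀ _ ht
  · calc t * (r - t * s + (s + t * r) * t) / (1 + t ^ 2)
      _ = t * r * (1 + t ^ 2) / (1 + t ^ 2) := by ring
      _ = t * r := mul_div_cancel_right₀ _ ht

theorem one_add_sq_ne_zero_of_not_isSquare_neg_one (hK : ¬IsSquare (-1 : K)) (t : K) :
    1 + t ^ 2 ≠ 0 :=
  fun ht => hK ⟨t, by linear_combination -ht⟩

theorem tangentComponent_comp_ruling (hK : ¬IsSquare (-1 : K)) (r s : K) :
    tangentComponent ∘ ruling r s = fun t => t • (-s, r) :=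
  funext fun t =>
    tangentComponent_ruling r s (one_add_sq_ne_zero_of_not_isSquare_neg_one hK t)

theorem bijOn_tangentComponent_range_ruling (hK : ¬IsSquare (-1 : K)) {r s : K}
    (hrs : (r, s) ≠ 0) :
    BijOn tangentComponent (range (ruling r s)) (range fun l : K => l • (-s, r)) := by
  have tangent_ne_zero : (-s, r) ≠ 0 := by
    simpa [Prod.ext_iff, and_comm] using hrs
  have comp_injective : Injective (tangentComponent ∘ ruling r s) := by
    rw [tangentComponent_comp_ruling hK]
    exact smul_left_injective K tangent_ne_zero
  simpa only [tangentComponent_comp_ruling hK] using bijOn_range_of_injective_comp comp_injective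

theorem stmt12_general (hK : ¬IsSquare (-1 : K)) {r s : K} (hrs : (r, s) ≠ 0) :
    (∀ t : K, tangentComponent (r - t * s, s + t * r, t) = (-(t * s), t * r)) ∧
      BijOn tangentComponent {p : K × K × K | ∃ t : K, p = (r - t * s, s + t * r, t)}
        {q : K × K | ∃ l : K, q = l • (-s, r)} := by
  refine ⟨fun t => ?_, ?_⟩
  · simpa [ruling] using congrFun (tangentComponent_comp_ruling hK r s) t
  · simpa only [range, ruling, eq_comm] using bijOn_tangentComponent_range_ruling hK hrs

end Field

/-- With `Ψ(x,y,z) = (z(−y+xz)/(1+z²), z(x+yz)/(1+z²))`, for every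
`(r,s)` on the unit circle and every `t`, `Ψ(r − ts, s + tr, t) = (−ts, tr)`; hence
`Ψ` maps the fiber `{(r − ts, s + tr, t) : t ∈ ℝ}` of the hyperboloid over `(r,s)`
bijectively (linearly in `t`) onto the tangent line `{λ·(−s, r) : λ ∈ ℝ}` to the
circle at `(r,s)`. -/
theorem stmt12 :
    let Ψ : ℝ × ℝ × ℝ → ℝ × ℝ := fun p =>
      (p.2.2 * (-p.2.1 + p.1 * p.2.2) / (1 + p.2.2 ^ 2),
        p.2.2 * (p.1 + p.2.1 * p.2.2) / (1 + p.2.2 ^ 2))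
    ∀ r s : ℝ, r ^ 2 + s ^ 2 = 1 →
      (∀ t : ℝ, Ψ (r - t * s, s + t * r, t) = (-(t * s), t * r)) ∧
      Set.BijOn Ψ {p : ℝ × ℝ × ℝ | ∃ t : ℝ, p = (r - t * s, s + t * r, t)}
        {q : ℝ × ℝ | ∃ l : ℝ, q = l • ((-s, r) : ℝ × ℝ)} :=
  fun r s h => stmt12_general (fun h_sq => by linarith [h_sq.nonneg])
    fun h_zero => by simp_all [Prod.ext_iff]
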